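/- arXiv:1302.1631 — 6 statements merged into one kernel-verified Lean document; each statement's English description precedes it below -/
import Mathlib

section
/- Let A, B ∈ SL₂(ℂ) with tr(A) = tr(B) = x and tr(AB) = z, and let n be a positive integer. Then tr((AB)^n·(BA)^{−n}) = 2 + (z−2)(z+2−x²)·S_{n−1}(z)². -/
/-!
If `X` and `Y` in `SL₂` have the same trace `z`, then with `s = S (n - 1) z` and `t = S (n - 2) z`
one has `X ^ n = s • X - t • 1` and `Y ^ (-n) = s • Y⁻¹ - t • 1`. So the trace of the product is a
quadratic form in `s` and `t`, which the invariant `s² + t² - z * s * t = 1` of the recurrence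
reduces to `2 + (tr (X * Y⁻¹) - 2) * s²`. For `X = A * B` and `Y = B * A` the element `X * Y⁻¹` is
the commutator of `A` and `B`, whose trace is given by Fricke's formula.
-/

open Polynomial (eval eval_sub eval_mul eval_X)
open Polynomial.Chebyshev
open scoped MatrixGroups commutatorElement

variable {R : Type*} [CommRing R]

section Recurrence

variable {M : Type*} [AddCommGroup M] [Module R M] {z : R}

theorem eq_of_recurrence {f g : ℤ → M} (hf : ∀ n, f (n + 1) = z • f n - f (n - 1))
    (hg : ∀ n, g (n + 1) = z • g n - g (n - 1)) (h0 : f 0 = g 0) (h1 : f 1 = g 1) (n : ℤ) :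
    f n = g n := by
  induction n using Polynomial.Chebyshev.induct with
  | zero => exact h0
  | one => exact h1
  | add_two n ih₁ ih₀ =>
    have h_succ {u : ℤ → M} (hu : ∀ n, u (n + 1) = z • u n - u (n - 1)) :
        u (n + 2) = z • u (n + 1) - u n := by
      simpa [add_assoc] using hu (n + 1)
    rw [h_succ hf, h_succ hg, ih₁, ih₀]
  | neg_add_one n ih₀ ih₁ =>
    have h_pred {u : ℤ → M} (hu : ∀ n, u (n + 1) = z • u n - u (n - 1)) :
        u (-n - 1) = z • u (-n) - u (-n + 1) := by
      rw [hu, sub_sub_cancel]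
    rw [h_pred hf, h_pred hg, ih₀, ih₁]

theorem eval_S_add_one (z : R) (n : ℤ) :
    (S R (n + 1)).eval z = z * (S R n).eval z - (S R (n - 1)).eval z := by
  rw [S_add_one, eval_sub, eval_mul, eval_X]

theorem eq_eval_S_of_recurrence {f : ℤ → R} (h0 : f 0 = 1) (h1 : f 1 = z)
    (hf : ∀ n, f (n + 1) = z * f n - f (n - 1)) (n : ℤ) : f n = (S R n).eval z :=
  eq_of_recurrence (z := z) (g := fun n ↦ (S R n).eval z) hf (eval_S_add_one z) (by simp [h0])
    (by simp [h1]) n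

theorem eq_eval_S_smul_sub_of_recurrence {f : ℤ → M}
    (hf : ∀ n, f (n + 1) = z • f n - f (n - 1)) (n : ℤ) :
    f n = (S R (n - 1)).eval z • f 1 - (S R (n - 2)).eval z • f 0 := by
  refine eq_of_recurrence (g := fun n ↦ (S R (n - 1)).eval z • f 1 - (S R (n - 2)).eval z • f 0)
    hf (fun k ↦ ?_) (by simp) (by simp) n
  rw [add_sub_right_comm k 1 1, add_sub_right_comm k 1 2, eval_S_add_one, eval_S_add_one,
    sub_right_comm k 1 2]
  module

end Recurrence

section SpecialLinear

theorem trace_coe_mul_comm {ι : Type*} [Fintype ι] [DecidableEq ι]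
    (A B : Matrix.SpecialLinearGroup ι R) :
    Matrix.trace ((A * B : Matrix.SpecialLinearGroup ι R) : Matrix ι ι R) =
      Matrix.trace ((B * A : Matrix.SpecialLinearGroup ι R) : Matrix ι ι R) := by
  rw [Matrix.SpecialLinearGroup.coe_mul, Matrix.SpecialLinearGroup.coe_mul, Matrix.trace_mul_comm]

local notation:1024 "↑ₘ" A:1024 => ((A : SL(2, R)) : Matrix (Fin 2) (Fin 2) R)

namespace SLTwo

open Matrix.SpecialLinearGroup

variable (X Y A B : SL(2, R))

theorem coe_inv_eq_trace_smul_one_sub : ↑ₘX⁻¹ = Matrix.trace ↑ₘX • 1 - ↑ₘX := by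
  rw [coe_inv, Matrix.adjugate_fin_two, Matrix.trace_fin_two]
  ext i j
  fin_cases i <;> fin_cases j <;> simp

theorem trace_inv : Matrix.trace ↑ₘX⁻¹ = Matrix.trace ↑ₘX := by
  rw [coe_inv_eq_trace_smul_one_sub, Matrix.trace_sub, Matrix.trace_smul, Matrix.trace_one,
    Fintype.card_fin, smul_eq_mul]
  ring

theorem trace_mul_inv :
    Matrix.trace ↑ₘ(X * Y⁻¹) =
      Matrix.trace ↑ₘX * Matrix.trace ↑ₘY - Matrix.trace ↑ₘ(X * Y) := by
  rw [coe_mul, coe_inv_eq_trace_smul_one_sub, mul_sub, mul_smul_comm, mul_one, Matrix.trace_sub,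
    Matrix.trace_smul, smul_eq_mul, coe_mul, mul_comm (Matrix.trace _)]

theorem trace_mul_self : Matrix.trace ↑ₘ(X * X) = Matrix.trace ↑ₘX ^ 2 - 2 := by
  have h := trace_mul_inv X X
  rw [mul_inv_cancel, coe_one, Matrix.trace_one, Fintype.card_fin] at h
  push_cast at h
  linear_combination h

theorem trace_commutator :
    Matrix.trace ↑ₘ⁅A, B⁆ =
      Matrix.trace ↑ₘA ^ 2 + Matrix.trace ↑ₘB ^ 2 + Matrix.trace ↑ₘ(A * B) ^ 2
        - Matrix.trace ↑ₘA * Matrix.trace ↑ₘB * Matrix.trace ↑ₘ(A * B) - 2 := by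
  have h_conj : Matrix.trace ↑ₘ(A * B * A⁻¹) = Matrix.trace ↑ₘB := by
    rw [trace_coe_mul_comm, inv_mul_cancel_left]
  have h_mul : Matrix.trace ↑ₘ(A * B * A⁻¹ * B) =
      Matrix.trace ↑ₘ(A * B) * Matrix.trace ↑ₘ(B⁻¹ * A) - Matrix.trace ↑ₘ(A * A) := by
    have h_inv : A * B * A⁻¹ * B = A * B * (B⁻¹ * A)⁻¹ := by group
    have h_cancel : A * B * (B⁻¹ * A) = A * A := by group
    rw [h_inv, trace_mul_inv, h_cancel]
  rw [commutatorElement_def, trace_mul_inv, h_conj, h_mul, trace_coe_mul_comm B⁻¹,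
    trace_mul_inv, trace_mul_self]
  ring

theorem coe_zpow_eq_eval_S_smul_sub (n : ℤ) :
    ↑ₘ(X ^ n) = (S R (n - 1)).eval (Matrix.trace ↑ₘX) • ↑ₘX
      - (S R (n - 2)).eval (Matrix.trace ↑ₘX) • 1 := by
  have h_rec (k : ℤ) : ↑ₘ(X ^ (k + 1)) = Matrix.trace ↑ₘX • ↑ₘ(X ^ k) - ↑ₘ(X ^ (k - 1)) := by
    rw [zpow_add_one, zpow_sub_one, coe_mul, coe_mul, coe_inv_eq_trace_smul_one_sub, mul_sub,
      mul_smul_comm, mul_one, sub_sub_cancel]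
  simpa using eq_eval_S_smul_sub_of_recurrence (f := fun k ↦ ↑ₘ(X ^ k)) h_rec n

variable {X Y} in
theorem trace_zpow_mul_zpow_neg (h : Matrix.trace ↑ₘX = Matrix.trace ↑ₘY) (n : ℤ) :
    Matrix.trace ↑ₘ(X ^ n * Y ^ (-n)) =
      2 + (Matrix.trace ↑ₘ(X * Y⁻¹) - 2) * (S R (n - 1)).eval (Matrix.trace ↑ₘX) ^ 2 := by
  set z := Matrix.trace ↑ₘX with hz
  set s := (S R (n - 1)).eval z
  set t := (S R (n - 2)).eval z
  have hX : ↑ₘ(X ^ n) = s • ↑ₘX - t • 1 := coe_zpow_eq_eval_S_smul_sub X n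
  have hY : ↑ₘ(Y ^ (-n)) = s • ↑ₘY⁻¹ - t • 1 := by
    rw [← inv_zpow', coe_zpow_eq_eval_S_smul_sub, trace_inv, ← h]
  have h_st : t ^ 2 + s ^ 2 - z * t * s = 1 := by
    have h_succ : n - 2 + 1 = n - 1 := by ring
    simpa [h_succ] using congrArg (eval z) (S_sq_add_S_sq R (n - 2))
  have h_expand : Matrix.trace ↑ₘ(X ^ n * Y ^ (-n)) =
      s ^ 2 * Matrix.trace ↑ₘ(X * Y⁻¹) - 2 * z * t * s + 2 * t ^ 2 := by
    rw [coe_mul, hX, hY, coe_mul]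
    simp only [sub_mul, mul_sub, smul_mul_assoc, mul_smul_comm, one_mul, mul_one,
      Matrix.trace_sub, Matrix.trace_smul, smul_eq_mul, Matrix.trace_one, Fintype.card_fin,
      trace_inv, ← h, ← hz]
    push_cast
    ring
  linear_combination h_expand + 2 * h_st

end SLTwo

theorem trace_ABn_BAn_SL2_general (A B : SL(2, R)) (n : ℤ) :
    Matrix.trace ↑ₘ((A * B) ^ n * (B * A) ^ (-n)) =
      2 + (Matrix.trace ↑ₘA ^ 2 + Matrix.trace ↑ₘB ^ 2 + Matrix.trace ↑ₘ(A * B) ^ 2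
          - Matrix.trace ↑ₘA * Matrix.trace ↑ₘB * Matrix.trace ↑ₘ(A * B) - 4)
        * (S R (n - 1)).eval (Matrix.trace ↑ₘ(A * B)) ^ 2 := by
  have h_comm : A * B * (B * A)⁻¹ = ⁅A, B⁆ := by
    rw [mul_inv_rev, commutatorElement_def, mul_assoc (A * B)]
  rw [SLTwo.trace_zpow_mul_zpow_neg (trace_coe_mul_comm A B), h_comm, SLTwo.trace_commutator]
  ring

end SpecialLinear

/-- For `A, B ∈ SL₂(ℂ)` with `tr A = tr B = x`,
`tr (A * B) = z`, and a positive integer `n`, one has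
`tr ((A*B)^n * (B*A)^(-n)) = 2 + (z - 2) * (z + 2 - x²) * S (n-1) z ^ 2`,
where the `S j` are the Chebyshev-like polynomials with `S 0 = 1`, `S 1 = z`
and `S (j+1) = z * S j - S (j-1)`. -/
theorem trace_ABn_BAn_SL2
    (S : ℤ → ℂ → ℂ)
    (hS0 : ∀ z : ℂ, S 0 z = 1)
    (hS1 : ∀ z : ℂ, S 1 z = z)
    (hSrec : ∀ (j : ℤ) (z : ℂ), S (j + 1) z = z * S j z - S (j - 1) z)
    (A B : Matrix.SpecialLinearGroup (Fin 2) ℂ) (x z : ℂ)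
    (hA : Matrix.trace (A : Matrix (Fin 2) (Fin 2) ℂ) = x)
    (hB : Matrix.trace (B : Matrix (Fin 2) (Fin 2) ℂ) = x)
    (hAB : Matrix.trace ((A * B : Matrix.SpecialLinearGroup (Fin 2) ℂ) : Matrix (Fin 2) (Fin 2) ℂ) = z)
    (n : ℕ) (hn : 1 ≤ n) :
    Matrix.trace
      (((A * B) ^ (n : ℤ) * (B * A) ^ (-(n : ℤ)) :
          Matrix.SpecialLinearGroup (Fin 2) ℂ) : Matrix (Fin 2) (Fin 2) ℂ)
      = 2 + (z - 2) * (z + 2 - x ^ 2) * S ((n : ℤ) - 1) z ^ 2 := by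
  rw [eq_eval_S_of_recurrence (f := (S · z)) (hS0 z) (hS1 z) (hSrec · z),
    trace_ABn_BAn_SL2_general, hA, hB, hAB]
  ring
end

section
/- Let A, B ∈ SL₂(ℂ) with tr(A) = tr(B) = x and tr(AB) = z, and let n be a positive integer. Then det(I + A·(AB)^{−n}·(BA)^n·A⁻¹) = det(I + (AB)^n·(BA)^{−n}) = 4 + (z−2)(z+2−x²)·S_{n−1}(z)². -/
/-!
Put `P = A * B` and `Q = B * A`, which have the same trace `z`. Multiplying by `Q ^ n` shows that
`det (1 + P ^ n * Q ^ (-n)) = det (P ^ n + Q ^ n)`, and the conjugated matrix has the same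
determinant. Since `det` is a quadratic form on `2 × 2` matrices, the parallelogram law turns this
into `4 - det (P ^ n - Q ^ n)`. By Cayley–Hamilton, `P ^ n - Q ^ n` satisfies the Chebyshev
recurrence in `n` and vanishes at `n = 0`, so it equals `S (n - 1) z • (P - Q)`; finally, the
determinant of the commutator `P - Q = A * B - B * A` is a polynomial in the traces of `A`, `B`
and `A * B`.
-/

section Recurrence

open Polynomial

variable {R V : Type*} [CommRing R] [AddCommGroup V] [Module R V] {t : R}

theorem eq_of_recurrence_s5 {u v : ℤ → V} (h0 : u 0 = v 0) (h1 : u 1 = v 1)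
    (hu : ∀ n, u (n + 1) = t • u n - u (n - 1)) (hv : ∀ n, v (n + 1) = t • v n - v (n - 1))
    (n : ℤ) : u n = v n := by
  induction n using Chebyshev.induct with
  | zero => exact h0
  | one => exact h1
  | add_two n ih₁ ih₀ =>
    rw [show (n : ℤ) + 2 = n + 1 + 1 by ring, hu, hv, add_sub_cancel_right, ih₁, ih₀]
  | neg_add_one n ih₀ ih₁ =>
    simpa only [hu, hv, ih₀, sub_right_inj] using ih₁

theorem eval_chebyshevS_add_one (t : R) (n : ℤ) :
    (Chebyshev.S R (n + 1)).eval t =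
      t * (Chebyshev.S R n).eval t - (Chebyshev.S R (n - 1)).eval t := by
  simp only [Chebyshev.S_add_one, eval_sub, eval_mul, eval_X]

theorem eq_chebyshevS_smul_sub_of_recurrence {u : ℤ → V}
    (hu : ∀ n, u (n + 1) = t • u n - u (n - 1)) (n : ℤ) :
    u n = (Chebyshev.S R (n - 1)).eval t • u 1 - (Chebyshev.S R (n - 2)).eval t • u 0 := by
  let v (k : ℤ) : V :=
    (Chebyshev.S R (k - 1)).eval t • u 1 - (Chebyshev.S R (k - 2)).eval t • u 0
  have hv (k : ℤ) : v (k + 1) = t • v k - v (k - 1) := by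
    simp only [v, add_sub_right_comm k 1, sub_right_comm k 1, eval_chebyshevS_add_one]
    module
  exact eq_of_recurrence_s5 (v := v) (by simp [v]) (by simp [v]) hu hv n

theorem eq_eval_chebyshevS_of_recurrence {u : ℤ → R} (h0 : u 0 = 1) (h1 : u 1 = t)
    (hu : ∀ n, u (n + 1) = t * u n - u (n - 1)) (n : ℤ) :
    u n = (Chebyshev.S R n).eval t :=
  eq_of_recurrence_s5 (t := t) (v := fun k ↦ (Chebyshev.S R k).eval t) (by simp [h0]) (by simp [h1])
    hu (eval_chebyshevS_add_one t) n

end Recurrence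

section TwoByTwo

variable {R : Type*} [CommRing R]

theorem add_adjugate_fin_two (M : Matrix (Fin 2) (Fin 2) R) :
    M + M.adjugate = M.trace • (1 : Matrix (Fin 2) (Fin 2) R) := by
  ext i j
  fin_cases i <;> fin_cases j <;>
    simp [Matrix.adjugate_fin_two, Matrix.trace_fin_two, add_comm]

theorem det_add_add_det_sub_fin_two (M N : Matrix (Fin 2) (Fin 2) R) :
    (M + N).det + (M - N).det = 2 * (M.det + N.det) := by
  simp only [Matrix.det_fin_two, Matrix.add_apply, Matrix.sub_apply]
  ring

theorem det_mul_sub_mul_fin_two (M N : Matrix (Fin 2) (Fin 2) R) :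
    (M * N - N * M).det =
      4 * M.det * N.det + M.trace * N.trace * (M * N).trace
        - M.trace ^ 2 * N.det - N.trace ^ 2 * M.det - (M * N).trace ^ 2 := by
  simp only [Matrix.det_fin_two, Matrix.trace_fin_two, Matrix.sub_apply, Matrix.mul_apply,
    Fin.sum_univ_two]
  ring

end TwoByTwo

section SpecialLinearGroup

open scoped MatrixGroups

variable {R : Type*} [CommRing R]

theorem det_one_add_coe_mul_comm {ι : Type*} [Fintype ι] [DecidableEq ι]
    (g h : Matrix.SpecialLinearGroup ι R) :
    (1 + (g * h : Matrix.SpecialLinearGroup ι R) : Matrix ι ι R).det =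
      (1 + (h * g : Matrix.SpecialLinearGroup ι R) : Matrix ι ι R).det := by
  rw [Matrix.SpecialLinearGroup.coe_mul, Matrix.SpecialLinearGroup.coe_mul,
    Matrix.det_one_add_mul_comm]

theorem det_one_add_coe_mul_inv {ι : Type*} [Fintype ι] [DecidableEq ι]
    (g h : Matrix.SpecialLinearGroup ι R) :
    (1 + (g * h⁻¹ : Matrix.SpecialLinearGroup ι R) : Matrix ι ι R).det =
      (g + h : Matrix ι ι R).det := by
  have hfactor : (g + h : Matrix ι ι R) =
      (1 + (g * h⁻¹ : Matrix.SpecialLinearGroup ι R)) * (h : Matrix ι ι R) := by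
    rw [add_mul, one_mul, ← Matrix.SpecialLinearGroup.coe_mul, inv_mul_cancel_right, add_comm]
  rw [hfactor, Matrix.det_mul, h.det_coe, mul_one]

theorem coe_zpow_add_one_fin_two (g : SL(2, R)) (n : ℤ) :
    (↑(g ^ (n + 1)) : Matrix (Fin 2) (Fin 2) R) =
      (g : Matrix (Fin 2) (Fin 2) R).trace • ↑(g ^ n) - ↑(g ^ (n - 1)) := by
  rw [eq_sub_iff_add_eq, zpow_add_one, zpow_sub_one, Matrix.SpecialLinearGroup.coe_mul,
    Matrix.SpecialLinearGroup.coe_mul, Matrix.SpecialLinearGroup.coe_inv, ← mul_add,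
    add_adjugate_fin_two, mul_smul_comm, mul_one]

theorem coe_zpow_sub_coe_zpow_fin_two {g h : SL(2, R)} {t : R}
    (hg : (g : Matrix (Fin 2) (Fin 2) R).trace = t)
    (hh : (h : Matrix (Fin 2) (Fin 2) R).trace = t) (n : ℤ) :
    (↑(g ^ n) - ↑(h ^ n) : Matrix (Fin 2) (Fin 2) R) =
      (Polynomial.Chebyshev.S R (n - 1)).eval t • (g - h : Matrix (Fin 2) (Fin 2) R) := by
  let u (k : ℤ) : Matrix (Fin 2) (Fin 2) R := ↑(g ^ k) - ↑(h ^ k)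
  have hu (k : ℤ) : u (k + 1) = t • u k - u (k - 1) := by
    simp only [u, coe_zpow_add_one_fin_two, hg, hh]
    module
  simpa [u] using eq_chebyshevS_smul_sub_of_recurrence hu n

theorem det_coe_add_coe_fin_two (g h : SL(2, R)) :
    (g + h : Matrix (Fin 2) (Fin 2) R).det = 4 - (g - h : Matrix (Fin 2) (Fin 2) R).det := by
  have hparallelogram := det_add_add_det_sub_fin_two (g : Matrix (Fin 2) (Fin 2) R) h
  rw [g.det_coe, h.det_coe] at hparallelogram
  linear_combination hparallelogram

theorem det_one_add_ABn_BAn_SL2_general (A B : SL(2, R)) {x y z : R}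
    (hA : (A : Matrix (Fin 2) (Fin 2) R).trace = x)
    (hB : (B : Matrix (Fin 2) (Fin 2) R).trace = y)
    (hAB : ((A * B : SL(2, R)) : Matrix (Fin 2) (Fin 2) R).trace = z) (n : ℤ) :
    (1 + ((A * (A * B) ^ (-n) * (B * A) ^ n * A⁻¹ : SL(2, R)) : Matrix (Fin 2) (Fin 2) R)).det =
        (1 + (((A * B) ^ n * (B * A) ^ (-n) : SL(2, R)) : Matrix (Fin 2) (Fin 2) R)).det ∧
      (1 + (((A * B) ^ n * (B * A) ^ (-n) : SL(2, R)) : Matrix (Fin 2) (Fin 2) R)).det =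
        4 + (x ^ 2 + y ^ 2 + z ^ 2 - x * y * z - 4) *
          (Polynomial.Chebyshev.S R (n - 1)).eval z ^ 2 := by
  have hBA : ((B * A : SL(2, R)) : Matrix (Fin 2) (Fin 2) R).trace = z := by
    rw [← hAB, Matrix.SpecialLinearGroup.coe_mul, Matrix.SpecialLinearGroup.coe_mul,
      Matrix.trace_mul_comm]
  have hcomm : ((A * B : SL(2, R)) - (B * A : SL(2, R)) : Matrix (Fin 2) (Fin 2) R).det =
      4 + x * y * z - x ^ 2 - y ^ 2 - z ^ 2 := by
    rw [Matrix.SpecialLinearGroup.coe_mul, Matrix.SpecialLinearGroup.coe_mul,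
      det_mul_sub_mul_fin_two, ← Matrix.SpecialLinearGroup.coe_mul, hA, hB, hAB, A.det_coe,
      B.det_coe]
    ring
  constructor
  · rw [det_one_add_coe_mul_comm, mul_assoc A, inv_mul_cancel_left, det_one_add_coe_mul_comm,
      zpow_neg, zpow_neg, det_one_add_coe_mul_inv, det_one_add_coe_mul_inv, add_comm]
  · rw [zpow_neg, det_one_add_coe_mul_inv, det_coe_add_coe_fin_two,
      coe_zpow_sub_coe_zpow_fin_two hAB hBA, Matrix.det_smul, hcomm, Fintype.card_fin]
    ring

end SpecialLinearGroup

/-- For `A, B ∈ SL₂(ℂ)` with `tr A = tr B = x`,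
`tr (A * B) = z`, and a positive integer `n`, one has
`det (I + A * (A*B)^(-n) * (B*A)^n * A⁻¹) = det (I + (A*B)^n * (B*A)^(-n))
  = 4 + (z - 2) * (z + 2 - x²) * S (n-1) z ^ 2`,
where the `S j` are the Chebyshev-like polynomials with `S 0 = 1`, `S 1 = z`
and `S (j+1) = z * S j - S (j-1)`. -/
theorem det_one_add_ABn_BAn_SL2
    (S : ℤ → ℂ → ℂ)
    (hS0 : ∀ z : ℂ, S 0 z = 1)
    (hS1 : ∀ z : ℂ, S 1 z = z)
    (hSrec : ∀ (j : ℤ) (z : ℂ), S (j + 1) z = z * S j z - S (j - 1) z)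
    (A B : Matrix.SpecialLinearGroup (Fin 2) ℂ) (x z : ℂ)
    (hA : Matrix.trace (A : Matrix (Fin 2) (Fin 2) ℂ) = x)
    (hB : Matrix.trace (B : Matrix (Fin 2) (Fin 2) ℂ) = x)
    (hAB : Matrix.trace ((A * B : Matrix.SpecialLinearGroup (Fin 2) ℂ) : Matrix (Fin 2) (Fin 2) ℂ) = z)
    (n : ℕ) (hn : 1 ≤ n) :
    Matrix.det
        (1 + ((A * (A * B) ^ (-(n : ℤ)) * (B * A) ^ (n : ℤ) * A⁻¹ :
            Matrix.SpecialLinearGroup (Fin 2) ℂ) : Matrix (Fin 2) (Fin 2) ℂ))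
      = Matrix.det
        (1 + (((A * B) ^ (n : ℤ) * (B * A) ^ (-(n : ℤ)) :
            Matrix.SpecialLinearGroup (Fin 2) ℂ) : Matrix (Fin 2) (Fin 2) ℂ)) ∧
    Matrix.det
        (1 + (((A * B) ^ (n : ℤ) * (B * A) ^ (-(n : ℤ)) :
            Matrix.SpecialLinearGroup (Fin 2) ℂ) : Matrix (Fin 2) (Fin 2) ℂ))
      = 4 + (z - 2) * (z + 2 - x ^ 2) * S ((n : ℤ) - 1) z ^ 2 := by
  have hcoeff : (z - 2) * (z + 2 - x ^ 2) = x ^ 2 + x ^ 2 + z ^ 2 - x * x * z - 4 := by ring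
  rw [eq_eval_chebyshevS_of_recurrence (u := (S · z)) (hS0 z) (hS1 z) (hSrec · z), hcoeff]
  exact det_one_add_ABn_BAn_SL2_general A B hA hB hAB n
end

section
/- Let n be a positive integer and let h₁(z) = S_{3n}(z) − S_{3n−1}(z) − (4 + (z²−4)·S_{n−1}(z)²)·(S_n(z) − S_{n−1}(z)). Then h₁ is a polynomial in z of degree n, it has exactly n distinct complex roots (i.e., h₁ has no multiple roots), and none of its roots equals 2 or −2. -/
open Polynomial

/-!
Let `V n = S n - S (n - 1)` be the Chebyshev polynomials of the third kind in the variable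
`X = 2 cos θ`, and let `C n` be `2 cos (n θ)`. Since `4 + (X² - 4) S (n - 1)² = 2 + C (2 n)` and
`C (2 n) V n = V (3 n) + V (n - 1)`, the polynomial `h₁` collapses to `-(2 V n + V (n - 1))`.

The `V n` obey a three-term recurrence with real coefficients, like any orthonormal sequence
`p 0, p 1, …`. The Christoffel–Darboux formula evaluated at `(z, conj z)` forces every complex root
`z` of a real combination `α p (n + 1) + β p n` to be real, as `∑ |p k z|² > 0`; its confluent form
forces the root to be simple, as `∑ (p k z)² > 0` for real `z`. Separability of `2 V n + V (n - 1)`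
then passes from `ℝ` down to `ℚ` and up to every field of characteristic zero.
-/

/-- The three-term recurrence of orthonormal polynomials, given by the Jacobi matrix with diagonal
`b` and off-diagonal `a`. It is normalised by `p 0 = 1`, and written with `a k` multiplying
`p (k + 1)` so that it makes sense without division. -/
structure JacobiRecurrence {R : Type*} [CommRing R] (a b : ℕ → R) (p : ℕ → R[X]) : Prop where
  zero : p 0 = 1
  one : C (a 0) * p 1 = X - C (b 0)
  add_two (k : ℕ) :
    C (a (k + 1)) * p (k + 2) = (X - C (b (k + 1))) * p (k + 1) - C (a k) * p k

lemma cross_sub_cross_eq_zero {R : Type*} [CommRing R] [NoZeroDivisors R] {α β u v u' v' : R}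
    (hαβ : α ≠ 0 ∨ β ≠ 0) (h : α * u + β * v = 0) (h' : α * u' + β * v' = 0) :
    u * v' - v * u' = 0 := by
  rcases hαβ with hα | hβ
  · refine (mul_eq_zero.1 ?_).resolve_left hα
    linear_combination v' * h - v * h'
  · refine (mul_eq_zero.1 ?_).resolve_left hβ
    linear_combination u * h' - u' * h

namespace JacobiRecurrence

section CommRing

variable {R : Type*} [CommRing R] {a b : ℕ → R} {p : ℕ → R[X]}

theorem christoffel_darboux {A : Type*} [CommRing A] [Algebra R A] (hp : JacobiRecurrence a b p)
    (n : ℕ) (x y : A) :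
    (x - y) * ∑ k ∈ Finset.range (n + 1), aeval x (p k) * aeval y (p k) =
      algebraMap R A (a n) *
        (aeval x (p (n + 1)) * aeval y (p n) - aeval x (p n) * aeval y (p (n + 1))) := by
  induction n with
  | zero =>
    have hone (z : A) : algebraMap R A (a 0) * aeval z (p 1) = z - algebraMap R A (b 0) := by
      simpa using congrArg (aeval z) hp.one
    simp only [zero_add, Finset.sum_range_one, hp.zero, map_one]
    linear_combination hone y - hone x
  | succ n ih =>
    have hstep (z : A) : algebraMap R A (a (n + 1)) * aeval z (p (n + 2)) =
        (z - algebraMap R A (b (n + 1))) * aeval z (p (n + 1)) -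
          algebraMap R A (a n) * aeval z (p n) := by
      simpa using congrArg (aeval z) (hp.add_two n)
    rw [Finset.sum_range_succ, mul_add, ih]
    linear_combination aeval x (p (n + 1)) * hstep y - aeval y (p (n + 1)) * hstep x

theorem christoffel_darboux_confluent (hp : JacobiRecurrence a b p) (n : ℕ) :
    ∑ k ∈ Finset.range (n + 1), p k ^ 2 =
      C (a n) * (derivative (p (n + 1)) * p n - derivative (p n) * p (n + 1)) := by
  induction n with
  | zero =>
    have hone : C (a 0) * derivative (p 1) = 1 := by simpa using congrArg derivative hp.one
    simp only [zero_add, Finset.sum_range_one, hp.zero, derivative_one]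
    linear_combination -hone
  | succ n ih =>
    have hstep : C (a (n + 1)) * derivative (p (n + 2)) =
        p (n + 1) + (X - C (b (n + 1))) * derivative (p (n + 1)) - C (a n) * derivative (p n) := by
      simpa using congrArg derivative (hp.add_two n)
    rw [Finset.sum_range_succ, ih]
    linear_combination derivative (p (n + 1)) * hp.add_two n - p (n + 1) * hstep

theorem degree_eq [IsDomain R] (hp : JacobiRecurrence a b p) (n : ℕ) : (p n).degree = n := by
  have degree_of_C_mul {c : R} {q : R[X]} {m : ℕ} (h : (C c * q).degree = m) : q.degree = m := by
    have hc : c ≠ 0 := by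
      rintro rfl
      simp at h
    rwa [degree_C_mul hc] at h
  induction n using Nat.twoStepInduction with
  | zero => simp [hp.zero]
  | one => exact degree_of_C_mul (by rw [hp.one, degree_X_sub_C, Nat.cast_one])
  | more n ih ih' =>
    have hlead : ((X - C (b (n + 1))) * p (n + 1)).degree = ((n + 2 : ℕ) : WithBot ℕ) := by
      rw [degree_mul, degree_X_sub_C, ih']
      norm_cast
      omega
    have hlower : (C (a n) * p n).degree < (n + 2 : ℕ) := by
      rw [← smul_eq_C_mul]
      exact (degree_smul_le _ _).trans_lt (by rw [ih]; norm_cast; omega)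
    refine degree_of_C_mul (c := a (n + 1)) ?_
    rw [hp.add_two, degree_sub_eq_left_of_degree_lt (hlead ▸ hlower), hlead]

theorem degree_linear_combination [IsDomain R] (hp : JacobiRecurrence a b p) {α : R} (hα : α ≠ 0)
    (β : R) (n : ℕ) : (C α * p (n + 1) + C β * p n).degree = (n + 1 : ℕ) := by
  have hlead : (C α * p (n + 1)).degree = (n + 1 : ℕ) := by rw [degree_C_mul hα, hp.degree_eq]
  have hlower : (C β * p n).degree < (n + 1 : ℕ) := by
    rw [← smul_eq_C_mul]
    exact (degree_smul_le _ _).trans_lt (by rw [hp.degree_eq]; norm_cast; omega)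
  rw [degree_add_eq_left_of_degree_lt (hlead ▸ hlower), hlead]

end CommRing

theorem eval_derivative_ne_zero {R : Type*} [CommRing R] [LinearOrder R] [IsStrictOrderedRing R]
    {a b : ℕ → R} {p : ℕ → R[X]} (hp : JacobiRecurrence a b p) {α β : R} (hαβ : α ≠ 0 ∨ β ≠ 0)
    {n : ℕ} {r : R} (hr : (C α * p (n + 1) + C β * p n).eval r = 0) :
    (derivative (C α * p (n + 1) + C β * p n)).eval r ≠ 0 := by
  intro hr'
  have hpos : 0 < ∑ k ∈ Finset.range (n + 1), (p k).eval r ^ 2 :=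
    Finset.sum_pos' (fun _ _ ↦ sq_nonneg _) ⟨0, by simp, by simp [hp.zero]⟩
  have hsum := congrArg (eval r) (hp.christoffel_darboux_confluent n)
  simp only [eval_finsetSum, eval_pow, eval_sub, eval_mul, eval_C] at hsum
  simp only [derivative_add, derivative_C_mul, eval_add, eval_mul, eval_C] at hr hr'
  have hcross := cross_sub_cross_eq_zero hαβ hr' hr
  exact hpos.ne' (by linear_combination hsum + a n * hcross)

section Real

open ComplexConjugate

variable {a b : ℕ → ℝ} {p : ℕ → ℝ[X]} {α β : ℝ} {n : ℕ}

theorem conj_eq_of_aeval_eq_zero (hp : JacobiRecurrence a b p) (hαβ : α ≠ 0 ∨ β ≠ 0) {z : ℂ}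
    (hz : aeval z (C α * p (n + 1) + C β * p n) = 0) : conj z = z := by
  have hpos : 0 < ∑ k ∈ Finset.range (n + 1), Complex.normSq (aeval z (p k)) :=
    Finset.sum_pos' (fun _ _ ↦ Complex.normSq_nonneg _) ⟨0, by simp, by simp [hp.zero]⟩
  have hkernel : ∑ k ∈ Finset.range (n + 1), aeval z (p k) * aeval (conj z) (p k) =
      ((∑ k ∈ Finset.range (n + 1), Complex.normSq (aeval z (p k)) : ℝ) : ℂ) := by
    simp only [aeval_conj, Complex.mul_conj, Complex.ofReal_sum]
  have hz' : aeval (conj z) (C α * p (n + 1) + C β * p n) = 0 := by rw [aeval_conj, hz, map_zero]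
  simp only [map_add, map_mul, aeval_C] at hz hz'
  have hαβ' : algebraMap ℝ ℂ α ≠ 0 ∨ algebraMap ℝ ℂ β ≠ 0 := by simpa using hαβ
  have hcd := hp.christoffel_darboux n z (conj z)
  rw [cross_sub_cross_eq_zero hαβ' hz hz', mul_zero, hkernel, mul_eq_zero, sub_eq_zero] at hcd
  exact (hcd.resolve_right (by exact_mod_cast hpos.ne')).symm

theorem separable (hp : JacobiRecurrence a b p) (hαβ : α ≠ 0 ∨ β ≠ 0) :
    (C α * p (n + 1) + C β * p n).Separable := by
  rw [Polynomial.Separable, isCoprime_iff_aeval_ne_zero_of_isAlgClosed (k := ℝ) ℂ]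
  intro z
  by_contra! ⟨hz, hz'⟩
  obtain ⟨r, rfl⟩ := Complex.conj_eq_iff_real.1 (hp.conj_eq_of_aeval_eq_zero hαβ hz)
  have aeval_eq_zero_iff (q : ℝ[X]) : aeval (r : ℂ) q = 0 ↔ q.eval r = 0 := by
    rw [← Complex.coe_algebraMap, aeval_algebraMap_apply_eq_algebraMap_eval]
    simp
  rw [aeval_eq_zero_iff] at hz hz'
  exact hp.eval_derivative_ne_zero hαβ hz hz'

end Real

end JacobiRecurrence

theorem eq_chebyshevS_of_recurrence {R : Type*} [CommRing R] {S : ℤ → R[X]} (hS0 : S 0 = 1)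
    (hS1 : S 1 = X) (hSrec : ∀ j : ℤ, S (j + 1) = X * S j - S (j - 1)) : S = Chebyshev.S R := by
  funext j
  induction j using Chebyshev.induct with
  | zero => rw [hS0, Chebyshev.S_zero]
  | one => rw [hS1, Chebyshev.S_one]
  | add_two k ih₁ ih₀ =>
    have h := hSrec (k + 1)
    rwa [add_sub_cancel_right, add_assoc, one_add_one_eq_two, ih₁, ih₀,
      ← Chebyshev.S_add_two] at h
  | neg_add_one k ih₀ ih₁ =>
    rw [Chebyshev.S_sub_one, ← ih₀, ← ih₁, hSrec, sub_sub_cancel]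

/-- The Chebyshev polynomials of the third kind, rescaled to the variable `2 cos θ` as Mathlib's
`Chebyshev.S` and `Chebyshev.C` are:
`chebyshevV R n` takes the value `cos ((n + 1/2) θ) / cos (θ / 2)` at `2 cos θ`. -/
noncomputable def chebyshevV (R : Type*) [CommRing R] (n : ℤ) : R[X] :=
  Chebyshev.S R n - Chebyshev.S R (n - 1)

theorem map_chebyshevV {R R' : Type*} [CommRing R] [CommRing R'] (f : R →+* R') (n : ℤ) :
    (chebyshevV R n).map f = chebyshevV R' n := by
  simp only [chebyshevV, Polynomial.map_sub, Chebyshev.map_S]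

section CommRing

variable (R : Type*) [CommRing R]

theorem chebyshevC_mul_chebyshevS (m k : ℤ) :
    Chebyshev.C R m * Chebyshev.S R k = Chebyshev.S R (k + m) + Chebyshev.S R (k - m) := by
  induction m using Chebyshev.induct with
  | zero => simp [two_mul]
  | one => rw [Chebyshev.C_one, Chebyshev.S_add_one, sub_add_cancel]
  | add_two m ih₁ ih₀ =>
    linear_combination (norm := ring_nf) Chebyshev.S R k * Chebyshev.C_add_two R m + X * ih₁ - ih₀
      - Chebyshev.S_add_two R (k + m) - Chebyshev.S_sub_two R (k - m)
  | neg_add_one m ih₀ ih₁ =>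
    linear_combination (norm := ring_nf) Chebyshev.S R k * Chebyshev.C_sub_one R (-m) + X * ih₀
      - ih₁ - Chebyshev.S_sub_one R (k - m) - Chebyshev.S_add_one R (k + m)

theorem chebyshevC_mul_chebyshevV (m k : ℤ) :
    Chebyshev.C R m * chebyshevV R k = chebyshevV R (k + m) + chebyshevV R (k - m) := by
  have h := chebyshevC_mul_chebyshevS R m k
  have h' := chebyshevC_mul_chebyshevS R m (k - 1)
  simp only [chebyshevV]
  linear_combination (norm := ring_nf) h - h'

theorem chebyshevC_two_mul (n : ℤ) :
    Chebyshev.C R (2 * n) = 2 + (X ^ 2 - 4) * Chebyshev.S R (n - 1) ^ 2 := by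
  have hsq : Chebyshev.C R n ^ 2 = Chebyshev.C R (2 * n) + 2 := by
    rw [sq, Chebyshev.C_mul_C, sub_self, Chebyshev.C_zero, two_mul]
  have hS := Chebyshev.S_sq_add_S_sq R (n - 1)
  rw [sub_add_cancel] at hS
  rw [Chebyshev.C_eq_S_sub_X_mul_S] at hsq
  linear_combination 4 * hS - hsq

theorem chebyshevV_neg (n : ℤ) : chebyshevV R (-n) = chebyshevV R (n - 1) := by
  rw [chebyshevV, chebyshevV, Chebyshev.S_neg, Chebyshev.S_neg_sub_one, sub_sub n,
    one_add_one_eq_two, neg_sub_neg]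

theorem chebyshevV_three_mul_sub_mul_chebyshevV (n : ℤ) :
    chebyshevV R (3 * n) - (4 + (X ^ 2 - 4) * Chebyshev.S R (n - 1) ^ 2) * chebyshevV R n =
      -(2 * chebyshevV R n + chebyshevV R (n - 1)) := by
  have hprod : Chebyshev.C R (2 * n) * chebyshevV R n =
      chebyshevV R (3 * n) + chebyshevV R (n - 1) := by
    rw [chebyshevC_mul_chebyshevV, ← chebyshevV_neg]
    ring_nf
  rw [chebyshevC_two_mul] at hprod
  linear_combination -hprod

theorem jacobiRecurrence_chebyshevV :
    JacobiRecurrence (fun _ ↦ 1) (Pi.single 0 1) (fun k : ℕ ↦ chebyshevV R k) where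
  zero := by simp [chebyshevV]
  one := by simp [chebyshevV]
  add_two k := by
    simp only [chebyshevV, map_one, Pi.single_eq_of_ne k.succ_ne_zero, map_zero, Nat.cast_add,
      Nat.cast_one, Nat.cast_ofNat]
    linear_combination (norm := ring_nf) Chebyshev.S_add_two R k - Chebyshev.S_add_one R k

theorem chebyshevV_eval_two (n : ℤ) : (chebyshevV R n).eval 2 = 1 := by
  simp [chebyshevV]

theorem chebyshevV_eval_neg_two (n : ℤ) :
    (chebyshevV R n).eval (-2) = n.negOnePow * (2 * n + 1) := by
  simp only [chebyshevV, eval_sub, Chebyshev.S_eval_neg_two, Int.negOnePow_sub, Int.negOnePow_one,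
    mul_neg_one, Units.val_neg, Int.cast_neg, Int.cast_sub, Int.cast_one]
  ring

theorem eval_two_two_mul_chebyshevV_add_chebyshevV (n : ℤ) :
    (2 * chebyshevV R (n + 1) + chebyshevV R n).eval 2 = 3 := by
  simp only [eval_add, eval_mul, eval_ofNat, chebyshevV_eval_two]
  norm_num

theorem eval_neg_two_two_mul_chebyshevV_add_chebyshevV (n : ℤ) :
    (2 * chebyshevV R (n + 1) + chebyshevV R n).eval (-2) = -(n.negOnePow * (2 * n + 5)) := by
  simp only [eval_add, eval_mul, eval_ofNat, chebyshevV_eval_neg_two, Int.negOnePow_succ]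
  push_cast
  ring

theorem degree_two_mul_chebyshevV_add_chebyshevV [IsDomain R] [NeZero (2 : R)] (n : ℕ) :
    (2 * chebyshevV R (n + 1) + chebyshevV R n).degree = (n + 1 : ℕ) := by
  simpa only [map_ofNat, map_one, one_mul, Nat.cast_add, Nat.cast_one] using
    (jacobiRecurrence_chebyshevV R).degree_linear_combination two_ne_zero 1 n

end CommRing

theorem separable_two_mul_chebyshevV_add_chebyshevV (K : Type*) [Field K] [CharZero K] (n : ℕ) :
    (2 * chebyshevV K (n + 1) + chebyshevV K n).Separable := by
  have hℝ : ((2 * chebyshevV ℚ (n + 1) + chebyshevV ℚ n).map (algebraMap ℚ ℝ)).Separable := by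
    simpa only [Polynomial.map_add, Polynomial.map_mul, Polynomial.map_ofNat, map_chebyshevV,
      map_ofNat, map_one, one_mul, Nat.cast_add, Nat.cast_one] using
      (jacobiRecurrence_chebyshevV ℝ).separable (α := 2) (β := 1) (n := n) (by simp)
  simpa [map_chebyshevV] using ((separable_map _).1 hℝ).map (f := algebraMap ℚ K)

theorem h1_distinct_roots_general {K : Type*} [Field K] [CharZero K] [IsAlgClosed K]
    [DecidableEq K] (S : ℤ → K[X]) (hS0 : S 0 = 1) (hS1 : S 1 = X)
    (hSrec : ∀ j : ℤ, S (j + 1) = X * S j - S (j - 1)) (n : ℕ) (hn : 1 ≤ n) (h₁ : K[X])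
    (hh₁ : h₁ = S (3 * (n : ℤ)) - S (3 * (n : ℤ) - 1)
        - (4 + (X ^ 2 - 4) * S ((n : ℤ) - 1) ^ 2) * (S (n : ℤ) - S ((n : ℤ) - 1))) :
    h₁.degree = n ∧ Squarefree h₁ ∧ h₁.roots.toFinset.card = n ∧
      ∀ z : K, h₁.eval z = 0 → z ≠ 2 ∧ z ≠ -2 := by
  obtain rfl := eq_chebyshevS_of_recurrence hS0 hS1 hSrec
  obtain ⟨m, rfl⟩ := Nat.exists_eq_add_of_le' hn
  have hV : h₁ = -(2 * chebyshevV K (m + 1) + chebyshevV K m) := by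
    simpa using hh₁.trans (chebyshevV_three_mul_sub_mul_chebyshevV K (m + 1 : ℕ))
  have hdeg : h₁.degree = (m + 1 : ℕ) := by
    rw [hV, degree_neg, degree_two_mul_chebyshevV_add_chebyshevV]
  have hsep : h₁.Separable := by
    rw [hV, ← neg_one_mul]
    exact (separable_two_mul_chebyshevV_add_chebyshevV K m).unit_mul isUnit_one.neg
  refine ⟨hdeg, hsep.squarefree, ?_, fun z hz ↦ ⟨?_, ?_⟩⟩
  · rw [Multiset.toFinset_card_of_nodup (nodup_roots hsep), IsAlgClosed.card_roots_eq_natDegree,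
      natDegree_eq_of_degree_eq_some hdeg]
  · rintro rfl
    rw [hV, eval_neg, eval_two_two_mul_chebyshevV_add_chebyshevV] at hz
    norm_num at hz
  · rintro rfl
    rw [hV, eval_neg, eval_neg_two_two_mul_chebyshevV_add_chebyshevV, neg_neg] at hz
    have hne : (2 * (m : ℤ) + 5 : K) ≠ 0 := by norm_cast
    exact mul_ne_zero (by simp) hne hz

/-- For a positive integer `n`, the polynomial
`h₁ = S (3n) - S (3n-1) - (4 + (X² - 4) * S (n-1) ^ 2) * (S n - S (n-1))`
(where the `S j` are the Chebyshev-like polynomials with `S 0 = 1`, `S 1 = X`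
and `S (j+1) = X * S j - S (j-1)`) has degree `n`, has no multiple roots,
has exactly `n` distinct complex roots, and none of its roots equals `2` or
`-2`. -/
theorem h1_distinct_roots
    (S : ℤ → Polynomial ℂ)
    (hS0 : S 0 = 1)
    (hS1 : S 1 = Polynomial.X)
    (hSrec : ∀ j : ℤ, S (j + 1) = Polynomial.X * S j - S (j - 1))
    (n : ℕ) (hn : 1 ≤ n)
    (h₁ : Polynomial ℂ)
    (hh₁ : h₁ = S (3 * (n : ℤ)) - S (3 * (n : ℤ) - 1)
        - (4 + (Polynomial.X ^ 2 - 4) * S ((n : ℤ) - 1) ^ 2)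
          * (S (n : ℤ) - S ((n : ℤ) - 1))) :
    h₁.degree = n ∧ Squarefree h₁ ∧ h₁.roots.toFinset.card = n ∧
      ∀ z : ℂ, h₁.eval z = 0 → z ≠ 2 ∧ z ≠ -2 :=
  h1_distinct_roots_general S hS0 hS1 hSrec n hn h₁ hh₁
end

section
/- Let n be a positive integer. The set of pairs (x,z) ∈ ℂ² satisfying both equations 4 + (z−2)(z+2−x²)·S_{n−1}(z)² = 0 and S_{3n}(z) − S_{3n−1}(z) − x²·(z−2)·S_{n−1}(z)²·(S_n(z) − S_{n−1}(z)) = 0 is finite and has exactly 2n elements. -/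
/-! Write `a = S_n(z)`, `b = S_{n-1}(z)` and `c = C_n(z) = 2a - zb`, where `C_n` is the Chebyshev
polynomial with `C_n(w + w⁻¹) = wⁿ + w⁻ⁿ`, and let `P_n = 2S_n - S_{n-1} - S_{n-2}`.
Since `c² - (z² - 4)b² = 4`, the first equation says `c² = x²(z - 2)b²`. Since
`S_{3n} - S_{3n-1} = C_n²(S_n - S_{n-1}) - P_n`, the second one then says `P_n(z) = 0`. At a root of
`P_n` we have `3c = -(z - 2)b ≠ 0`, which turns the first equation into `z = 9x² + 2`. So the
solutions correspond to the roots of `P_n(9x² + 2)`, of degree `2n`. These are simple: `P_n(2) = 3`,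
and `P_n` has `n` distinct real roots because its signs alternate at the `n + 1` points
`2cos(2kπ/(2n + 1))`. -/

open Polynomial
open scoped Real

section SeparablePolynomials

theorem card_roots_toFinset_of_alternating_signs {p : ℝ[X]} {n : ℕ} {x : ℕ → ℝ}
    (hx : StrictAntiOn x (Set.Iic n)) (hsign : ∀ k ≤ n, 0 < (-1) ^ k * p.eval (x k)) :
    n ≤ p.roots.toFinset.card := by
  have hp : p ≠ 0 := by
    rintro rfl
    simpa using hsign 0 n.zero_le
  have exists_root_between (k : ℕ) (hk : k < n) :
      ∃ r, (x (k + 1) < r ∧ r < x k) ∧ p.IsRoot r := by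
    have hneg : (-1) ^ k * p.eval (x (k + 1)) < 0 := by
      have := hsign (k + 1) hk
      rw [pow_succ] at this
      linarith
    obtain ⟨r, hr, hr0⟩ := intermediate_value_Ioo (f := fun y ↦ (-1) ^ k * p.eval y)
      (hx hk.le hk k.lt_succ_self).le (by fun_prop) ⟨hneg, hsign k hk.le⟩
    exact ⟨r, hr, (mul_eq_zero.mp hr0).resolve_left (by simp)⟩
  choose! r hr hroot using exists_root_between
  have hanti : StrictAntiOn r (Set.Iio n) := fun i hi j hj hij ↦
    calc r j < x j := (hr j hj).2
      _ ≤ x (i + 1) := hx.antitoneOn (Nat.succ_le_of_lt hi) (Set.mem_Iio.mp hj).le hij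
      _ < r i := (hr i hi).1
  rw [← Finset.card_range n]
  refine Finset.card_le_card_of_injOn r (fun k hk ↦ ?_) (by simpa using hanti.injOn)
  simpa [hp] using hroot k (Finset.mem_range.mp hk)

theorem separable_of_natDegree_le_card_roots_toFinset {K : Type*} [Field K] [DecidableEq K]
    {p : K[X]} (hp : p ≠ 0) (h : p.natDegree ≤ p.roots.toFinset.card) : p.Separable := by
  have hroots : p.roots.card ≤ p.roots.toFinset.card := (card_roots' p).trans h
  have hsplits : p.Splits := splits_iff_card_roots.mpr <|
    (card_roots' p).antisymm (h.trans (Multiset.toFinset_card_le _))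
  rw [← nodup_roots_iff_of_splits hp hsplits, ← Multiset.toFinset_card_eq_card_iff_nodup]
  exact (Multiset.toFinset_card_le _).antisymm hroots

variable {K : Type*} [Field K] [IsAlgClosed K]

theorem separable_comp_of_eval_critical_ne_zero {p q : K[X]} (hp : p.Separable)
    (hq : ∀ x, (derivative q).eval x = 0 → p.eval (q.eval x) ≠ 0) : (p.comp q).Separable := by
  rw [Separable, isCoprime_iff_aeval_ne_zero_of_isAlgClosed K K]
  intro x
  by_contra! h
  simp only [coe_aeval_eq_eval, derivative_comp, eval_mul, eval_comp, mul_eq_zero] at h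
  obtain ⟨hroot, hcrit | hderiv⟩ := h
  · exact hq x hcrit hroot
  · exact hp.eval₂_derivative_ne_zero (RingHom.id K) hroot hderiv

theorem ncard_rootSet_of_separable {p : K[X]} (hp : p.Separable) :
    (p.rootSet K).ncard = p.natDegree := by
  rw [← Nat.card_coe_set_eq, Nat.card_eq_fintype_card,
    card_rootSet_eq_natDegree hp (IsAlgClosed.splits _)]

end SeparablePolynomials

section ChebyshevS

theorem eq_eval_chebyshev_S {R : Type*} [CommRing R] {s : ℤ → R} {z : R} (h0 : s 0 = 1)
    (h1 : s 1 = z) (hrec : ∀ j, s (j + 1) = z * s j - s (j - 1)) (j : ℤ) :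
    s j = (Chebyshev.S R j).eval z := by
  induction j using Chebyshev.induct with
  | zero => simp [h0]
  | one => simp [h1]
  | add_two k ih1 ih0 =>
    have h := hrec (k + 1)
    rw [add_assoc, one_add_one_eq_two, add_sub_cancel_right] at h
    simp [h, ih0, ih1, Chebyshev.S_add_two]
  | neg_add_one k ih0 ih1 =>
    simp only [Chebyshev.S_sub_one, eval_sub, eval_mul, eval_X, ← ih0, ← ih1, hrec, sub_sub_cancel]

variable (R : Type*) [CommRing R]

theorem chebyshev_S_mul_C (m k : ℤ) :
    Chebyshev.S R m * Chebyshev.C R k = Chebyshev.S R (m + k) + Chebyshev.S R (m - k) := by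
  induction k using Chebyshev.induct' with
  | zero => simp [mul_two]
  | one => rw [Chebyshev.S_add_one, Chebyshev.C_one]; ring
  | add_two k ih1 ih0 =>
    have h₁ := Chebyshev.S_add_two R (m + k)
    have h₂ := Chebyshev.S_sub_two R (m - k)
    have h₃ := Chebyshev.C_add_two R k
    linear_combination (norm := ring_nf)
      Chebyshev.S R m * h₃ - h₂ - h₁ - ih0 + (X : R[X]) * ih1
  | neg k ih => rw [Chebyshev.C_neg, ih, sub_neg_eq_add, ← sub_eq_add_neg, add_comm]

theorem chebyshev_C_sq_sub_mul_S_sq (n : ℤ) :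
    Chebyshev.C R n ^ 2 - (X ^ 2 - 4) * Chebyshev.S R (n - 1) ^ 2 = 4 := by
  have h := Chebyshev.S_sq_add_S_sq R (n - 1)
  rw [sub_add_cancel] at h
  rw [Chebyshev.C_eq_S_sub_X_mul_S]
  linear_combination 4 * h

theorem natDegree_chebyshev_S [IsDomain R] [NeZero (2 : R)] (n : ℤ) :
    (Chebyshev.S R n).natDegree = (n + 1).natAbs - 1 := by
  have h2X : (2 * X : R[X]).natDegree = 1 := natDegree_C_mul_X 2 two_ne_zero
  rw [← Chebyshev.natDegree_U R, ← Chebyshev.S_comp_two_mul_X, natDegree_comp, h2X, mul_one]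

theorem eval_chebyshev_S_sub_mul_cos (φ : ℝ) (n : ℤ) :
    ((Chebyshev.S ℝ n).eval (2 * Real.cos (2 * φ)) -
      (Chebyshev.S ℝ (n - 1)).eval (2 * Real.cos (2 * φ))) * Real.cos φ =
      Real.cos ((2 * n + 1) * φ) := by
  rcases eq_or_ne (Real.sin φ) 0 with hsin | hsin
  · obtain ⟨m, rfl⟩ := Real.sin_eq_zero_iff.mp hsin
    have harg : (2 * n + 1) * (m * π) = m * π + (n * m : ℤ) * (2 * π) := by
      push_cast
      ring
    rw [harg, Real.cos_add_int_mul_two_pi, mul_left_comm, Real.cos_int_mul_two_pi, mul_one,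
      Chebyshev.S_eval_two, Chebyshev.S_eval_two]
    push_cast
    ring
  · have h := Chebyshev.S_two_mul_real_cos (2 * φ) n
    have h' := Chebyshev.S_two_mul_real_cos (2 * φ) (n - 1)
    rw [show ((n : ℝ) + 1) * (2 * φ) = (2 * n + 1) * φ + φ by ring, Real.sin_add,
      Real.sin_two_mul] at h
    rw [Int.cast_sub, Int.cast_one, show ((n : ℝ) - 1 + 1) * (2 * φ) = (2 * n + 1) * φ - φ by ring,
      Real.sin_sub, Real.sin_two_mul] at h'
    apply mul_right_cancel₀ hsin
    linear_combination (h - h') / 2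

end ChebyshevS

section GenusPolynomial

/-- The polynomial `2 S_n - S_{n-1} - S_{n-2}`, whose roots are the `z`-coordinates of the solutions
of the genus system. -/
noncomputable def genusPolynomial (R : Type*) [CommRing R] (n : ℤ) : R[X] :=
  2 * Chebyshev.S R n - Chebyshev.S R (n - 1) - Chebyshev.S R (n - 2)

theorem map_genusPolynomial {R R' : Type*} [CommRing R] [CommRing R'] (f : R →+* R') (n : ℤ) :
    (genusPolynomial R n).map f = genusPolynomial R' n := by
  simp [genusPolynomial]

section CommRing

variable (R : Type*) [CommRing R] (n : ℤ)

theorem genusPolynomial_eval_two : (genusPolynomial R n).eval 2 = 3 := by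
  simp only [genusPolynomial, eval_sub, eval_mul, eval_ofNat, Chebyshev.S_eval_two]
  push_cast
  ring

theorem genusPolynomial_eq : genusPolynomial R n =
    3 * Chebyshev.S R n - (X + 1) * Chebyshev.S R (n - 1) := by
  rw [genusPolynomial, Chebyshev.S_sub_two]
  ring

theorem two_mul_genusPolynomial : 2 * genusPolynomial R n =
    3 * Chebyshev.C R n + (X - 2) * Chebyshev.S R (n - 1) := by
  rw [genusPolynomial_eq, Chebyshev.C_eq_S_sub_X_mul_S]
  ring

theorem chebyshev_S_three_mul_sub : Chebyshev.S R (3 * n) - Chebyshev.S R (3 * n - 1) =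
    Chebyshev.C R n ^ 2 * (Chebyshev.S R n - Chebyshev.S R (n - 1)) - genusPolynomial R n := by
  have hC : Chebyshev.C R n ^ 2 = Chebyshev.C R (2 * n) + 2 := by
    rw [sq, Chebyshev.C_mul_C, sub_self, Chebyshev.C_zero, two_mul]
  have h3n : Chebyshev.S R n * Chebyshev.C R (2 * n) =
      Chebyshev.S R (3 * n) - Chebyshev.S R (n - 2) := by
    rw [chebyshev_S_mul_C, show n - 2 * n = -n by ring, Chebyshev.S_neg]
    ring_nf
  have h3n_sub_one : Chebyshev.S R (n - 1) * Chebyshev.C R (2 * n) =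
      Chebyshev.S R (3 * n - 1) - Chebyshev.S R (n - 1) := by
    rw [chebyshev_S_mul_C, show n - 1 - 2 * n = -n - 1 by ring, Chebyshev.S_neg_sub_one]
    ring_nf
  rw [hC, genusPolynomial]
  linear_combination h3n_sub_one - h3n

end CommRing

theorem natDegree_genusPolynomial_le {R : Type*} [CommRing R] [IsDomain R] [NeZero (2 : R)]
    (n : ℕ) : (genusPolynomial R n).natDegree ≤ n := by
  have hS (k : ℤ) (hk : (k + 1).natAbs ≤ n + 1) : (Chebyshev.S R k).natDegree ≤ n := by
    rw [natDegree_chebyshev_S]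
    lia
  have h2S : (2 * Chebyshev.S R n).natDegree ≤ n :=
    (natDegree_C_mul_le 2 _).trans (hS n (by lia))
  simpa only [genusPolynomial, max_self] using natDegree_sub_le_of_le
    (natDegree_sub_le_of_le h2S (hS (n - 1) (by lia))) (hS (n - 2) (by lia))

theorem genusPolynomial_eval_mul_cos (φ : ℝ) (n : ℤ) :
    (genusPolynomial ℝ n).eval (2 * Real.cos (2 * φ)) * Real.cos φ =
      2 * Real.cos ((2 * n + 1) * φ) + Real.cos ((2 * n - 1) * φ) := by
  have h := eval_chebyshev_S_sub_mul_cos φ n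
  have h' := eval_chebyshev_S_sub_mul_cos φ (n - 1)
  rw [sub_sub, one_add_one_eq_two, Int.cast_sub, Int.cast_one,
    show 2 * ((n : ℝ) - 1) + 1 = 2 * n - 1 by ring] at h'
  simp only [genusPolynomial, eval_sub, eval_mul, eval_ofNat]
  linear_combination 2 * h + h'

theorem neg_one_pow_mul_genusPolynomial_eval_pos {n k : ℕ} (hk : k ≤ n) :
    0 < (-1) ^ k * (genusPolynomial ℝ n).eval (2 * Real.cos (2 * (k * π / (2 * n + 1)))) := by
  set φ := k * π / (2 * (n : ℝ) + 1) with hφ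
  have hkn : (k : ℝ) ≤ n := mod_cast hk
  have hφ_lt : φ < π / 2 := by
    rw [hφ, div_lt_iff₀ (by positivity)]
    nlinarith [Real.pi_pos]
  have hcos_pos : 0 < Real.cos φ :=
    Real.cos_pos_of_mem_Ioo ⟨by linarith [Real.pi_pos, show 0 ≤ φ by positivity], hφ_lt⟩
  have hcos : Real.cos ((2 * (n : ℤ) + 1) * φ) = (-1) ^ k := by
    rw [hφ, Int.cast_natCast, mul_div_cancel₀ _ (by positivity), Real.cos_nat_mul_pi]
  refine pos_of_mul_pos_left ?_ hcos_pos.le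
  rw [mul_assoc, genusPolynomial_eval_mul_cos, hcos]
  have hlower := Real.neg_one_le_cos ((2 * (n : ℤ) - 1) * φ)
  have hupper := Real.cos_le_one ((2 * (n : ℤ) - 1) * φ)
  rcases neg_one_pow_eq_or ℝ k with h | h <;> rw [h] <;> linarith

theorem le_card_roots_genusPolynomial (n : ℕ) :
    n ≤ (genusPolynomial ℝ n).roots.toFinset.card := by
  refine card_roots_toFinset_of_alternating_signs (fun i _ j hj hij ↦ ?_)
    fun k hk ↦ neg_one_pow_mul_genusPolynomial_eval_pos hk
  have hjn : (j : ℝ) ≤ n := mod_cast hj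
  have hj_le : 2 * (j * π / (2 * n + 1)) ≤ π := by
    rw [← mul_div_assoc, div_le_iff₀ (by positivity)]
    nlinarith [Real.pi_pos]
  have hcos := Real.cos_lt_cos_of_nonneg_of_le_pi (x := 2 * (i * π / (2 * n + 1))) (by positivity)
    hj_le (by gcongr)
  gcongr

variable (K : Type*) [Field K]

theorem genusPolynomial_ne_zero [NeZero (3 : K)] (n : ℤ) : genusPolynomial K n ≠ 0 := by
  intro h
  have h2 := genusPolynomial_eval_two K n
  rw [h, eval_zero] at h2
  exact three_ne_zero h2.symm

theorem natDegree_genusPolynomial [CharZero K] (n : ℕ) : (genusPolynomial K n).natDegree = n := by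
  have hreal : (genusPolynomial ℝ n).natDegree = n :=
    (natDegree_genusPolynomial_le n).antisymm <| (le_card_roots_genusPolynomial n).trans <|
      (Multiset.toFinset_card_le _).trans (card_roots' _)
  rw [← map_genusPolynomial (algebraMap ℚ K), natDegree_map,
    ← natDegree_map (algebraMap ℚ ℝ), map_genusPolynomial, hreal]

theorem separable_genusPolynomial [CharZero K] (n : ℕ) : (genusPolynomial K n).Separable := by
  have hreal : (genusPolynomial ℝ n).Separable :=
    separable_of_natDegree_le_card_roots_toFinset (genusPolynomial_ne_zero ℝ n) <|
      (natDegree_genusPolynomial ℝ n).trans_le (le_card_roots_genusPolynomial n)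
  rw [← map_genusPolynomial (algebraMap ℚ ℝ), separable_map] at hreal
  rw [← map_genusPolynomial (algebraMap ℚ K), separable_map]
  exact hreal

end GenusPolynomial

section GenusSystem

/-- The set of solutions `(x, z)` in `K²` of the genus system, the pair of equations whose solutions
over `ℂ` are counted in `genus_system_card`; `S_j` is Mathlib's `Chebyshev.S K j`. -/
def genusSystem (K : Type*) [CommRing K] (n : ℤ) : Set (K × K) :=
  {p | 4 + (p.2 - 2) * (p.2 + 2 - p.1 ^ 2) * (Chebyshev.S K (n - 1)).eval p.2 ^ 2 = 0 ∧
    (Chebyshev.S K (3 * n)).eval p.2 - (Chebyshev.S K (3 * n - 1)).eval p.2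
      - p.1 ^ 2 * (p.2 - 2) * (Chebyshev.S K (n - 1)).eval p.2 ^ 2
        * ((Chebyshev.S K n).eval p.2 - (Chebyshev.S K (n - 1)).eval p.2) = 0}

theorem mem_genusSystem_iff_chebyshev_C_sq {K : Type*} [CommRing K] {n : ℤ} {x z : K} :
    (x, z) ∈ genusSystem K n ↔ (Chebyshev.C K n).eval z ^ 2 =
      x ^ 2 * (z - 2) * (Chebyshev.S K (n - 1)).eval z ^ 2 ∧ (genusPolynomial K n).eval z = 0 := by
  have hpell := congrArg (eval z) (chebyshev_C_sq_sub_mul_S_sq K n)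
  have htriple := congrArg (eval z) (chebyshev_S_three_mul_sub K n)
  simp only [eval_sub, eval_mul, eval_pow, eval_X, eval_ofNat] at hpell htriple
  rw [genusSystem, Set.mem_ofPred_eq, htriple]
  refine ⟨fun ⟨h1, h2⟩ ↦ ⟨?_, ?_⟩, fun ⟨h1, h2⟩ ↦ ⟨?_, ?_⟩⟩
  · linear_combination h1 + hpell
  · linear_combination ((Chebyshev.S K n).eval z - (Chebyshev.S K (n - 1)).eval z) *
      (h1 + hpell) - h2
  · linear_combination h1 - hpell
  · linear_combination ((Chebyshev.S K n).eval z - (Chebyshev.S K (n - 1)).eval z) * h1 - h2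

variable {K : Type*} [Field K] [NeZero (3 : K)] {n : ℤ}

theorem sub_two_ne_zero_of_genusPolynomial_eval_eq_zero {z : K}
    (hz : (genusPolynomial K n).eval z = 0) : z - 2 ≠ 0 := by
  intro h
  rw [sub_eq_zero.mp h, genusPolynomial_eval_two] at hz
  exact three_ne_zero hz

theorem chebyshev_S_eval_ne_zero_of_genusPolynomial_eval_eq_zero {z : K}
    (hz : (genusPolynomial K n).eval z = 0) : (Chebyshev.S K (n - 1)).eval z ≠ 0 := by
  intro h
  have hS : (Chebyshev.S K n).eval z = 0 := by
    rw [genusPolynomial_eq] at hz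
    simpa [h, three_ne_zero] using hz
  simpa [h, hS] using congrArg (eval z) (Chebyshev.S_sq_add_S_sq K (n - 1))

theorem mem_genusSystem_iff {x z : K} :
    (x, z) ∈ genusSystem K n ↔ z = 9 * x ^ 2 + 2 ∧ (genusPolynomial K n).eval z = 0 := by
  rw [mem_genusSystem_iff_chebyshev_C_sq]
  refine and_congr_left fun hz ↦ ?_
  have hlin := congrArg (eval z) (two_mul_genusPolynomial K n)
  simp only [eval_add, eval_sub, eval_mul, eval_X, eval_ofNat, hz] at hlin
  have h9 : (3 : K) ^ 2 ≠ 0 := pow_ne_zero 2 three_ne_zero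
  set b := (Chebyshev.S K (n - 1)).eval z
  set c := (Chebyshev.C K n).eval z
  have hzb : (z - 2) * b ^ 2 ≠ 0 := mul_ne_zero
    (sub_two_ne_zero_of_genusPolynomial_eval_eq_zero hz)
    (pow_ne_zero 2 (chebyshev_S_eval_ne_zero_of_genusPolynomial_eval_eq_zero hz))
  have hsq : 3 ^ 2 * c ^ 2 = (z - 2) * ((z - 2) * b ^ 2) := by
    linear_combination ((z - 2) * b - 3 * c) * hlin
  calc c ^ 2 = x ^ 2 * (z - 2) * b ^ 2
      ↔ 3 ^ 2 * c ^ 2 = 3 ^ 2 * (x ^ 2 * (z - 2) * b ^ 2) := (mul_right_inj' h9).symm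
    _ ↔ (z - 2) * ((z - 2) * b ^ 2) = 9 * x ^ 2 * ((z - 2) * b ^ 2) := by
      rw [hsq]; ring_nf
    _ ↔ z - 2 = 9 * x ^ 2 := mul_left_inj' hzb
    _ ↔ z = 9 * x ^ 2 + 2 := sub_eq_iff_eq_add

theorem genusSystem_eq_image :
    genusSystem K n = (fun x ↦ (x, 9 * x ^ 2 + 2)) ''
      ((genusPolynomial K n).comp (9 * X ^ 2 + 2)).rootSet K := by
  have hne : (genusPolynomial K n).comp (9 * X ^ 2 + 2) ≠ 0 := by
    intro h
    have h0 := congrArg (eval 0) h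
    simp [genusPolynomial_eval_two, three_ne_zero] at h0
  ext ⟨x, z⟩
  simp only [mem_genusSystem_iff, Set.mem_image, mem_rootSet_of_ne hne, coe_aeval_eq_eval,
    eval_comp, eval_add, eval_mul, eval_pow, eval_X, eval_ofNat, Prod.mk.injEq]
  constructor
  · rintro ⟨rfl, hz⟩
    exact ⟨x, hz, rfl, rfl⟩
  · rintro ⟨x, hz, rfl, rfl⟩
    exact ⟨rfl, hz⟩

end GenusSystem

theorem genus_system_card_general (K : Type*) [Field K] [IsAlgClosed K] [CharZero K] (n : ℕ) :
    (genusSystem K n).Finite ∧ (genusSystem K n).ncard = 2 * n := by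
  have hdegree : (9 * X ^ 2 + 2 : K[X]).natDegree = 2 := by
    compute_degree!
  have hsep : ((genusPolynomial K n).comp (9 * X ^ 2 + 2)).Separable := by
    refine separable_comp_of_eval_critical_ne_zero (separable_genusPolynomial K n) fun x hx ↦ ?_
    obtain rfl : x = 0 := by simpa using hx
    simp [genusPolynomial_eval_two]
  rw [genusSystem_eq_image]
  refine ⟨(rootSet_finite _ K).image _, ?_⟩
  rw [Set.ncard_image_of_injective _ fun x y h ↦ congrArg Prod.fst h,
    ncard_rootSet_of_separable hsep, natDegree_comp, natDegree_genusPolynomial, hdegree, mul_comm]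

/-- For a positive integer `n`, the set of pairs
`(x, z) ∈ ℂ²` satisfying `4 + (z-2)*(z+2-x²)*S (n-1) z ^ 2 = 0` and
`S (3n) z - S (3n-1) z - x²*(z-2)*S (n-1) z ^ 2*(S n z - S (n-1) z) = 0`
is finite and has exactly `2n` elements (where the `S j` are the
Chebyshev-like polynomials with `S 0 = 1`, `S 1 = z` and
`S (j+1) = z * S j - S (j-1)`). -/
theorem genus_system_card
    (S : ℤ → ℂ → ℂ)
    (hS0 : ∀ z : ℂ, S 0 z = 1)
    (hS1 : ∀ z : ℂ, S 1 z = z)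
    (hSrec : ∀ (j : ℤ) (z : ℂ), S (j + 1) z = z * S j z - S (j - 1) z)
    (n : ℕ) (hn : 1 ≤ n) :
    Set.Finite {p : ℂ × ℂ |
        4 + (p.2 - 2) * (p.2 + 2 - p.1 ^ 2) * S ((n : ℤ) - 1) p.2 ^ 2 = 0 ∧
        S (3 * (n : ℤ)) p.2 - S (3 * (n : ℤ) - 1) p.2
          - p.1 ^ 2 * (p.2 - 2) * S ((n : ℤ) - 1) p.2 ^ 2
            * (S (n : ℤ) p.2 - S ((n : ℤ) - 1) p.2) = 0} ∧
    Set.ncard {p : ℂ × ℂ |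
        4 + (p.2 - 2) * (p.2 + 2 - p.1 ^ 2) * S ((n : ℤ) - 1) p.2 ^ 2 = 0 ∧
        S (3 * (n : ℤ)) p.2 - S (3 * (n : ℤ) - 1) p.2
          - p.1 ^ 2 * (p.2 - 2) * S ((n : ℤ) - 1) p.2 ^ 2
            * (S (n : ℤ) p.2 - S ((n : ℤ) - 1) p.2) = 0} = 2 * n := by
  obtain rfl : S = fun j z ↦ (Chebyshev.S ℂ j).eval z :=
    funext₂ fun j z ↦ eq_eval_chebyshev_S (s := (S · z)) (hS0 z) (hS1 z) (hSrec · z) j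
  exact genus_system_card_general ℂ n
end

section
/- Let M ∈ SL₂(ℂ) with y = tr(M), and let n be a positive integer. Then (y − 2)·det(I + M + M² + ⋯ + M^{n−1}) = T_n(y) − 2. In particular, if y ≠ 2 then det(Σ_{j=0}^{n−1} M^j) = (T_n(y) − 2)/(y − 2). -/
/-!
By Cayley–Hamilton a `2 × 2` matrix `A` satisfies `A ^ 2 = tr A • A - det A • 1`, so the traces of
its powers obey the recurrence of the Dickson polynomials of the first kind with parameter `det A`;
for `det A = 1` this is the recurrence of the `T j`. Taking determinants in
`(A - 1) * ∑ j < n, A ^ j = A ^ n - 1` and expanding `det (B - 1) = det B - tr B + 1` for `B = A`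
and `B = A ^ n` gives the identity.
-/

section CommRing

variable {R : Type*} [CommRing R]

theorem eq_eval_dickson_of_recurrence {k : ℕ} {a x : R} {t : ℕ → R} (h0 : t 0 = 3 - k)
    (h1 : t 1 = x) (hrec : ∀ n, t (n + 2) = x * t (n + 1) - a * t n) (n : ℕ) :
    t n = (Polynomial.dickson k a n).eval x := by
  induction n using Nat.twoStepInduction with
  | zero => simp [h0]
  | one => simp [h1]
  | more n ih ih' => simp [hrec, ih, ih', Polynomial.dickson_add_two]

variable (A : Matrix (Fin 2) (Fin 2) R)

theorem sq_eq_trace_smul_sub_det_smul_one : A ^ 2 = A.trace • A - A.det • 1 := by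
  nontriviality R
  have cayley_hamilton := A.aeval_self_charpoly
  simp only [A.charpoly_fin_two, map_add, map_sub, map_mul, map_pow, Polynomial.aeval_X,
    Polynomial.aeval_C, Algebra.algebraMap_eq_smul_one, smul_one_mul] at cayley_hamilton
  rw [eq_sub_iff_add_eq, ← sub_eq_zero, ← cayley_hamilton]
  abel

theorem det_sub_one_fin_two : (A - 1).det = A.det - A.trace + 1 := by
  simp only [Matrix.det_fin_two, Matrix.trace_fin_two, Matrix.sub_apply, Matrix.one_apply_eq,
    Matrix.one_apply_ne zero_ne_one, Matrix.one_apply_ne one_ne_zero]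
  ring

theorem trace_pow_add_two_fin_two (n : ℕ) :
    (A ^ (n + 2)).trace = A.trace * (A ^ (n + 1)).trace - A.det * (A ^ n).trace := by
  rw [pow_add, sq_eq_trace_smul_sub_det_smul_one, mul_sub, mul_smul_comm, mul_smul_comm, mul_one,
    ← pow_succ, Matrix.trace_sub, Matrix.trace_smul, Matrix.trace_smul, smul_eq_mul, smul_eq_mul]

theorem trace_pow_fin_two (n : ℕ) :
    (A ^ n).trace = (Polynomial.dickson 1 A.det n).eval A.trace :=
  eq_eval_dickson_of_recurrence (t := fun n ↦ (A ^ n).trace) (by norm_num) (by simp)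
    (trace_pow_add_two_fin_two A) n

theorem mul_det_geom_sum_fin_two (n : ℕ) :
    (A.det - A.trace + 1) * (∑ j ∈ Finset.range n, A ^ j).det =
      A.det ^ n - (Polynomial.dickson 1 A.det n).eval A.trace + 1 := by
  rw [← det_sub_one_fin_two, ← Matrix.det_mul, mul_geom_sum, det_sub_one_fin_two, Matrix.det_pow,
    trace_pow_fin_two]

theorem trace_sub_two_mul_det_geom_sum {A : Matrix (Fin 2) (Fin 2) R} (hA : A.det = 1) (n : ℕ) :
    (A.trace - 2) * (∑ j ∈ Finset.range n, A ^ j).det =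
      (Polynomial.dickson 1 1 n).eval A.trace - 2 := by
  have h := mul_det_geom_sum_fin_two A n
  rw [hA, one_pow] at h
  linear_combination -h

end CommRing

theorem det_geom_sum_SL2_general {K : Type*} [Field K]
    (T : ℤ → K → K)
    (hT0 : ∀ z : K, T 0 z = 2)
    (hT1 : ∀ z : K, T 1 z = z)
    (hTrec : ∀ (j : ℤ) (z : K), T (j + 1) z = z * T j z - T (j - 1) z)
    (M : Matrix.SpecialLinearGroup (Fin 2) K) (y : K)
    (hy : Matrix.trace (M : Matrix (Fin 2) (Fin 2) K) = y) (n : ℕ) :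
    (y - 2) * Matrix.det (∑ j ∈ Finset.range n, (M : Matrix (Fin 2) (Fin 2) K) ^ j)
        = T (n : ℤ) y - 2 ∧
    (y ≠ 2 → Matrix.det (∑ j ∈ Finset.range n, (M : Matrix (Fin 2) (Fin 2) K) ^ j)
        = (T (n : ℤ) y - 2) / (y - 2)) := by
  have h0 : T ↑(0 : ℕ) y = 3 - ↑(1 : ℕ) := by
    rw [Nat.cast_zero, hT0]
    norm_num
  have hrec (j : ℕ) : T ↑(j + 2) y = y * T ↑(j + 1) y - 1 * T j y := by
    simpa [add_assoc] using hTrec (j + 1) y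
  have hT : T n y = (Polynomial.dickson 1 1 n).eval y :=
    eq_eval_dickson_of_recurrence (t := fun j ↦ T j y) h0 (by simp [hT1]) hrec n
  have key : (y - 2) * Matrix.det (∑ j ∈ Finset.range n, (M : Matrix (Fin 2) (Fin 2) K) ^ j)
      = T n y - 2 := by
    rw [hT, ← hy, trace_sub_two_mul_det_geom_sum M.det_coe]
  exact ⟨key, fun h ↦ eq_div_of_mul_eq (sub_ne_zero.mpr h) (by rw [mul_comm, key])⟩

/-- For `M ∈ SL₂(ℂ)` with `y = tr M` and a positive integer
`n`, one has `(y - 2) * det (I + M + ⋯ + M^(n-1)) = T n y - 2`; in particular,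
if `y ≠ 2` then `det (∑_{j=0}^{n-1} M^j) = (T n y - 2)/(y - 2)`.  Here the
`T j` are the Chebyshev-like polynomials with `T 0 = 2`, `T 1 = y` and
`T (j+1) = y * T j - T (j-1)`. -/
theorem det_geom_sum_SL2
    (T : ℤ → ℂ → ℂ)
    (hT0 : ∀ z : ℂ, T 0 z = 2)
    (hT1 : ∀ z : ℂ, T 1 z = z)
    (hTrec : ∀ (j : ℤ) (z : ℂ), T (j + 1) z = z * T j z - T (j - 1) z)
    (M : Matrix.SpecialLinearGroup (Fin 2) ℂ) (y : ℂ)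
    (hy : Matrix.trace (M : Matrix (Fin 2) (Fin 2) ℂ) = y)
    (n : ℕ) (hn : 1 ≤ n) :
    (y - 2) * Matrix.det (∑ j ∈ Finset.range n, (M : Matrix (Fin 2) (Fin 2) ℂ) ^ j)
        = T (n : ℤ) y - 2 ∧
    (y ≠ 2 → Matrix.det (∑ j ∈ Finset.range n, (M : Matrix (Fin 2) (Fin 2) ℂ) ^ j)
        = (T (n : ℤ) y - 2) / (y - 2)) := by
  exact det_geom_sum_SL2_general T hT0 hT1 hTrec M y hy n
end

section
/- Let n > 1 be an integer and define R_even(x,y) = (y+1)·S_{n−1}(y)² − S_n(y)² − 2·S_{n−1}(y)·S_n(y) + x²·S_{n−1}(y)·(S_n(y) − S_{n−1}(y)). Then the set of pairs (x,y) ∈ ℂ² satisfying y ≠ 2, T_n(y) = 2, and R_even(x,y) = 0 is finite and has exactly 1 + (−1)^n elements (i.e., 2 elements if n is even and 0 elements if n is odd). -/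
/-!
In Mathlib's notation the two families are `Chebyshev.S` and `Chebyshev.C`, evaluated at `y`.
The Pell equation `C n ^ 2 - 4 = (X ^ 2 - 4) * S (n - 1) ^ 2` shows that `C n y = 2` forces
`y = 2`, `y = -2` or `S (n - 1) y = 0`. In the last case `S n y ^ 2 = 1`, so that
`R_even x y = -1` and the point is not on the curve. At `y = -2` one has `C n y = 2 * (-1) ^ n`,
which excludes odd `n`, and `R_even x (-2) = -(1 + n * (2 * n + 1) * x ^ 2)`, which has two
opposite nonzero roots `x`.
-/

open Polynomial

section CommRing

variable {R : Type*} [CommRing R]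

theorem eq_of_chebyshev_recurrence {z : R} {f g : ℤ → R} (h0 : f 0 = g 0) (h1 : f 1 = g 1)
    (hf : ∀ j, f (j + 1) = z * f j - f (j - 1)) (hg : ∀ j, g (j + 1) = z * g j - g (j - 1))
    (j : ℤ) : f j = g j := by
  induction j using Chebyshev.induct with
  | zero => exact h0
  | one => exact h1
  | add_two n ih₁ ih₀ =>
    have hf' := hf (n + 1)
    have hg' := hg (n + 1)
    rw [add_assoc, one_add_one_eq_two, add_sub_cancel_right] at hf' hg'
    rw [hf', hg', ih₁, ih₀]
  | neg_add_one n ih₀ ih₁ =>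
    linear_combination hf (-n) - hg (-n) + z * ih₀ - ih₁

theorem eq_chebyshevS_eval {f : ℤ → R → R} (h0 : ∀ z, f 0 z = 1) (h1 : ∀ z, f 1 z = z)
    (hf : ∀ j z, f (j + 1) z = z * f j z - f (j - 1) z) :
    f = fun j z ↦ (Chebyshev.S R j).eval z := by
  funext j z
  exact eq_of_chebyshev_recurrence (f := (f · z)) (g := fun j ↦ (Chebyshev.S R j).eval z)
    (by simp [h0]) (by simp [h1]) (hf · z) (fun j ↦ by simp [Chebyshev.S_add_one]) j

theorem eq_chebyshevC_eval {f : ℤ → R → R} (h0 : ∀ z, f 0 z = 2) (h1 : ∀ z, f 1 z = z)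
    (hf : ∀ j z, f (j + 1) z = z * f j z - f (j - 1) z) :
    f = fun j z ↦ (Chebyshev.C R j).eval z := by
  funext j z
  exact eq_of_chebyshev_recurrence (f := (f · z)) (g := fun j ↦ (Chebyshev.C R j).eval z)
    (by simp [h0]) (by simp [h1]) (hf · z) (fun j ↦ by simp [Chebyshev.C_add_one]) j

theorem chebyshevS_sub_one_sq_add_sq (n : ℤ) :
    Chebyshev.S R (n - 1) ^ 2 + Chebyshev.S R n ^ 2
      - X * Chebyshev.S R (n - 1) * Chebyshev.S R n = 1 := by
  simpa using Chebyshev.S_sq_add_S_sq R (n - 1)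

theorem chebyshevC_sq_sub_four (n : ℤ) :
    Chebyshev.C R n ^ 2 - 4 = (X ^ 2 - 4) * Chebyshev.S R (n - 1) ^ 2 := by
  rw [Chebyshev.C_eq_S_sub_X_mul_S]
  linear_combination 4 * chebyshevS_sub_one_sq_add_sq (R := R) n

/-- The polynomial function `R_even(x, y)` of index `n`, with an arbitrary integer index and over
an arbitrary commutative ring. -/
noncomputable def rEven (n : ℤ) (x y : R) : R :=
  (y + 1) * (Chebyshev.S R (n - 1)).eval y ^ 2 - (Chebyshev.S R n).eval y ^ 2
    - 2 * (Chebyshev.S R (n - 1)).eval y * (Chebyshev.S R n).eval y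
    + x ^ 2 * (Chebyshev.S R (n - 1)).eval y
      * ((Chebyshev.S R n).eval y - (Chebyshev.S R (n - 1)).eval y)

theorem rEven_eq_neg_one {n : ℤ} {y : R} (hS : (Chebyshev.S R (n - 1)).eval y = 0) (x : R) :
    rEven n x y = -1 := by
  have hSn : (Chebyshev.S R n).eval y ^ 2 = 1 := by
    simpa [hS] using congrArg (eval y) (chebyshevS_sub_one_sq_add_sq (R := R) n)
  simp [rEven, hS, hSn]

theorem rEven_neg_two (n : ℤ) (x : R) : rEven n x (-2) = -(1 + n * (2 * n + 1) * x ^ 2) := by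
  have hsign : ((n.negOnePow : ℤ) : R) ^ 2 = 1 := by
    rw [← Int.cast_pow, ← Units.val_pow_eq_pow_val, Int.units_sq, Units.val_one, Int.cast_one]
  simp only [rEven, Chebyshev.S_eval_neg_two, Int.negOnePow_sub, Int.negOnePow_one]
  push_cast
  linear_combination (-1 - n * (2 * n + 1) * x ^ 2) * hsign

variable (R) in
/-- The intersection of the curve `R_even(x, y) = 0` with the lines `y = c`, where `c` runs over
the solutions other than `2` of `T_n(c) = 2`. Mathlib's `Chebyshev.C` is the family called `T` in
the statement. -/
def evenTwistPoints (n : ℤ) : Set (R × R) :=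
  {p | p.2 ≠ 2 ∧ (Chebyshev.C R n).eval p.2 = 2 ∧ rEven n p.1 p.2 = 0}

theorem snd_eq_neg_two_of_mem_evenTwistPoints [IsDomain R] {n : ℤ} {p : R × R}
    (hp : p ∈ evenTwistPoints R n) : p.2 = -2 := by
  obtain ⟨hy, hC, hR⟩ := hp
  have hS : (Chebyshev.S R (n - 1)).eval p.2 ≠ 0 := fun hS ↦
    neg_ne_zero.mpr one_ne_zero ((rEven_eq_neg_one hS p.1).symm.trans hR)
  have hPell : (p.2 ^ 2 - 4) * (Chebyshev.S R (n - 1)).eval p.2 ^ 2 = 0 := by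
    have h := congrArg (eval p.2) (chebyshevC_sq_sub_four (R := R) n)
    simp only [eval_sub, eval_mul, eval_pow, eval_X, eval_ofNat, hC] at h
    linear_combination -h
  have hsq : p.2 ^ 2 = 2 ^ 2 := by
    linear_combination (mul_eq_zero.mp hPell).resolve_right (pow_ne_zero 2 hS)
  exact (sq_eq_sq_iff_eq_or_eq_neg.mp hsq).resolve_left hy

theorem evenTwistPoints_of_odd [IsDomain R] {n : ℤ} (hn : Odd n) : evenTwistPoints R n = ∅ := by
  refine Set.eq_empty_of_forall_notMem fun p hp ↦ hp.1 ?_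
  have hy := snd_eq_neg_two_of_mem_evenTwistPoints hp
  have hC := hp.2.1
  rw [hy, Chebyshev.C_eval_neg_two, Int.negOnePow_odd n hn] at hC
  rw [hy]
  simpa using hC

theorem evenTwistPoints_of_even [IsDomain R] [NeZero (2 : R)] {n : ℤ} (hn : Even n) :
    evenTwistPoints R n = {x : R | n * (2 * n + 1) * x ^ 2 = -1} ×ˢ {-2} := by
  have hcurve (x : R) : rEven n x (-2) = 0 ↔ n * (2 * n + 1) * x ^ 2 = -1 := by
    rw [rEven_neg_two, neg_eq_zero, add_comm, add_eq_zero_iff_eq_neg]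
  ext ⟨x, y⟩
  constructor
  · intro hp
    obtain rfl : y = -2 := snd_eq_neg_two_of_mem_evenTwistPoints hp
    exact ⟨(hcurve x).mp hp.2.2, rfl⟩
  · rintro ⟨hx, rfl : y = -2⟩
    have htwo : (-2 : R) ≠ 2 := fun h ↦
      mul_ne_zero two_ne_zero two_ne_zero (show (2 : R) * 2 = 0 by linear_combination -h)
    exact ⟨htwo, by simp [Int.negOnePow_even n hn], (hcurve x).mpr hx⟩

end CommRing

section Field

variable {K : Type*} [Field K] [IsAlgClosed K]

theorem ncard_setOf_mul_sq_eq [NeZero (2 : K)] {a b : K} (ha : a ≠ 0) (hb : b ≠ 0) :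
    {x : K | a * x ^ 2 = b}.ncard = 2 := by
  obtain ⟨c, hc⟩ := IsAlgClosed.exists_pow_nat_eq (b / a) two_pos
  have hc0 : c ≠ 0 := by
    rintro rfl
    exact div_ne_zero hb ha (by simpa using hc.symm)
  have hroots : {x : K | a * x ^ 2 = b} = {c, -c} := by
    ext x
    rw [Set.mem_ofPred_eq, mul_comm, ← eq_div_iff ha, ← hc, sq_eq_sq_iff_eq_or_eq_neg]
    rfl
  have hne : c ≠ -c := fun h ↦
    mul_ne_zero two_ne_zero hc0 (by linear_combination h)
  rw [hroots, Set.ncard_pair hne]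

theorem ncard_evenTwistPoints_of_even {n : ℤ} (heven : Even n) (hn : (n * (2 * n + 1) : K) ≠ 0) :
    (evenTwistPoints K n).ncard = 2 := by
  have : NeZero (2 : K) := by
    refine ⟨fun h2 ↦ hn ?_⟩
    obtain ⟨m, rfl⟩ := heven
    push_cast
    linear_combination m * (2 * (m + m) + 1) * h2
  rw [evenTwistPoints_of_even heven, Set.ncard_prod, Set.ncard_singleton, mul_one,
    ncard_setOf_mul_sq_eq hn (neg_ne_zero.mpr one_ne_zero)]

theorem twist_even_genus_card_general {n : ℤ} (hn : (n * (2 * n + 1) : K) ≠ 0) :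
    (evenTwistPoints K n).Finite ∧ ((evenTwistPoints K n).ncard : ℤ) = 1 + n.negOnePow := by
  rcases Int.even_or_odd n with heven | hodd
  · have hcard := ncard_evenTwistPoints_of_even heven hn
    refine ⟨Set.finite_of_ncard_ne_zero (by simp [hcard]), ?_⟩
    simp [hcard, Int.negOnePow_even n heven]
  · simp [evenTwistPoints_of_odd hodd, Int.negOnePow_odd n hodd]

end Field

/-- For an integer `n > 1`, define
`R_even x y = (y+1)*S (n-1) y ^ 2 - S n y ^ 2 - 2*S (n-1) y*S n y
  + x²*S (n-1) y*(S n y - S (n-1) y)`.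
Then the set of `(x, y) ∈ ℂ²` with `y ≠ 2`, `T n y = 2` and
`R_even x y = 0` is finite and has exactly `1 + (-1)^n` elements.  Here `S`
and `T` are the Chebyshev-like polynomial families with `S 0 = 1`, `S 1 = z`,
`T 0 = 2`, `T 1 = z` and the common recurrence `f (j+1) = z * f j - f (j-1)`. -/
theorem twist_even_genus_card
    (S T : ℤ → ℂ → ℂ)
    (hS0 : ∀ z : ℂ, S 0 z = 1)
    (hS1 : ∀ z : ℂ, S 1 z = z)
    (hSrec : ∀ (j : ℤ) (z : ℂ), S (j + 1) z = z * S j z - S (j - 1) z)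
    (hT0 : ∀ z : ℂ, T 0 z = 2)
    (hT1 : ∀ z : ℂ, T 1 z = z)
    (hTrec : ∀ (j : ℤ) (z : ℂ), T (j + 1) z = z * T j z - T (j - 1) z)
    (n : ℕ) (hn : 1 < n)
    (Reven : ℂ → ℂ → ℂ)
    (hReven : ∀ x y : ℂ, Reven x y
        = (y + 1) * S ((n : ℤ) - 1) y ^ 2 - S (n : ℤ) y ^ 2
          - 2 * S ((n : ℤ) - 1) y * S (n : ℤ) y
          + x ^ 2 * S ((n : ℤ) - 1) y * (S (n : ℤ) y - S ((n : ℤ) - 1) y)) :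
    Set.Finite {p : ℂ × ℂ | p.2 ≠ 2 ∧ T (n : ℤ) p.2 = 2 ∧ Reven p.1 p.2 = 0} ∧
    (Set.ncard {p : ℂ × ℂ | p.2 ≠ 2 ∧ T (n : ℤ) p.2 = 2 ∧ Reven p.1 p.2 = 0} : ℤ)
      = 1 + (-1) ^ n := by
  obtain rfl := eq_chebyshevS_eval hS0 hS1 hSrec
  obtain rfl := eq_chebyshevC_eval hT0 hT1 hTrec
  obtain rfl : Reven = rEven (n : ℤ) := funext₂ hReven
  have hn₀ : n * (2 * n + 1) ≠ 0 := by positivity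
  rw [← Int.coe_negOnePow_natCast]
  exact twist_even_genus_card_general (K := ℂ) (n := n) (mod_cast hn₀)
end
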